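/- Let 1 ≤ s ≤ S < p/2 with S ≥ 2, let u > 1, and set t = S·max{ √(4u·log S/(n(p−S))), 8u·log S/(n(p−S)) }. Consider the test Δ that rejects if and only if ∑_{i=1}^{S} |Tr(A_i(Σ_n − I_p))| ≥ t. If σ ≥ t + max{ √(4(u−1)(2s+1)·log S/(n(p−S))), 8(u−1)(2s+1)·log S/(n(p−S)) }, then P_{I_p}[Δ rejects] + sup_{Σ ∈ F(s,S,σ)} P_Σ[Δ accepts] ≤ 4·exp(−(u−1)·log S), where P_{I_p} (resp. P_Σ) denotes the law of Σ_n when X_1,…,X_n are i.i.d. N_p(0, I_p) (resp. N_p(0, Σ)). -/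

import Mathlib

open MeasureTheory Matrix Real
open scoped ENNReal BigOperators NNReal

noncomputable def gaussianPDF {p : ℕ} (C : Matrix (Fin p) (Fin p) ℝ) (x : Fin p → ℝ) : ℝ≥0∞ :=
  ENNReal.ofReal ((2 * Real.pi) ^ (-(p : ℝ) / 2) * C.det ^ (-(1:ℝ)/2) *
    Real.exp (-(1/2) * (x ⬝ᵥ C⁻¹.mulVec x)))

/-- The centered multivariate Gaussian measure `N_p(0, C)` on `Fin p → ℝ`. -/
noncomputable def gaussianMeasure {p : ℕ} (C : Matrix (Fin p) (Fin p) ℝ) :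
    Measure (Fin p → ℝ) :=
  MeasureTheory.volume.withDensity (gaussianPDF C)

/-- The law of `n` i.i.d. `N_p(0, C)` vectors. -/
noncomputable def iidGaussian (n p : ℕ) (C : Matrix (Fin p) (Fin p) ℝ) :
    Measure (Fin n → Fin p → ℝ) :=
  MeasureTheory.volume.withDensity fun X => ∏ k, gaussianPDF C (X k)

/-- The sample covariance matrix `Σ_n = (1/n) ∑ X_k X_kᵀ`. -/
noncomputable def sampleCov {n p : ℕ} (X : Fin n → Fin p → ℝ) :
    Matrix (Fin p) (Fin p) ℝ :=
  (n : ℝ)⁻¹ • ∑ k, Matrix.of fun i j => X k i * X k j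

/-- Frobenius norm of a matrix. -/
noncomputable def frobNorm {p : ℕ} (M : Matrix (Fin p) (Fin p) ℝ) : ℝ :=
  Real.sqrt (∑ i, ∑ j, (M i j)^2)

/-- Spectral (ℓ²-operator) norm of a matrix. -/
noncomputable def specNorm {p : ℕ} (M : Matrix (Fin p) (Fin p) ℝ) : ℝ :=
  ‖Matrix.toEuclideanCLM (𝕜 := ℝ) M‖

/-- The matrix `A_j` with entries `1/(2(p-j))` on the `j`-th upper and lower diagonals. -/
noncomputable def lagMatrix (p j : ℕ) : Matrix (Fin p) (Fin p) ℝ :=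
  Matrix.of fun k l => if ((k:ℤ) - (l:ℤ)).natAbs = j then 1/(2*((p:ℝ) - j)) else 0

/-- Two-sided class `F(s,S,σ)` of sparse Toeplitz covariance matrices with
diagonal value `σ0`. -/
def memF (p s S : ℕ) (σ σ0 : ℝ) (C : Matrix (Fin p) (Fin p) ℝ) : Prop :=
  C.PosDef ∧ ∃ v : ℕ → ℝ, v 0 = σ0 ∧
    (∀ i j : Fin p, C i j = v ((i:ℤ) - (j:ℤ)).natAbs) ∧
    ∃ T : Finset ℕ, T ⊆ Finset.Icc 1 S ∧ T.card = s ∧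
      (∀ j ∈ T, σ ≤ |v j|) ∧ (∀ j, 1 ≤ j → j ≤ p - 1 → j ∉ T → v j = 0)

/-- One-sided class `F₊(s,S,σ)` of sparse Toeplitz covariance matrices with
diagonal value `σ0`. -/
def memFplus (p s S : ℕ) (σ σ0 : ℝ) (C : Matrix (Fin p) (Fin p) ℝ) : Prop :=
  C.PosDef ∧ ∃ v : ℕ → ℝ, v 0 = σ0 ∧
    (∀ i j : Fin p, C i j = v ((i:ℤ) - (j:ℤ)).natAbs) ∧
    ∃ T : Finset ℕ, T ⊆ Finset.Icc 1 S ∧ T.card = s ∧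
      (∀ j ∈ T, σ ≤ v j) ∧ (∀ j, 1 ≤ j → j ≤ p - 1 → j ∉ T → v j = 0)

/-!
If `X ∼ N_p(0, C)` and `B` is symmetric, pick `W` with `W Wᵀ = C` and `Wᵀ B W` diagonal: then
`Xᵀ B X - tr (B C)` is distributed as `∑ᵢ dᵢ (zᵢ² - 1)` with `z` standard Gaussian, so it has
sub-gamma tails governed by `tr (B C B C)` and `‖C‖ ‖B‖`. Averaging over the sample gives a
Bernstein inequality for `tr (B (Σ_n - C))`.

For `B = A_j` and `C` Toeplitz with correlations `v`, one has `tr (A_j C) = v j`,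
`‖A_j‖ ≤ 1 / (p - j)`, and `tr (A_j C A_j C) ≤ ‖C‖ tr (A_j² C)`. Since `A_j²` lives on the lags `0`
and `2 j`, the last trace equals `v 0 / (2 (p - j))` as soon as `v (2 j) = 0`; under the alternative
this holds for the largest lag `j` with `v j ≠ 0`, and `‖C‖ ≤ 2 s + 1` because every entry of a
correlation matrix is at most `1` in absolute value. A union bound over the lags controls the type I
error, and the deviation at this single lag `j` controls the type II error.
-/

open ProbabilityTheory (gaussianReal mgf iIndepFun)

section SubGamma

variable {Ω : Type*} {mΩ : MeasurableSpace Ω} {μ : Measure Ω} {X : Ω → ℝ} {v c : ℝ}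

/-- A real random variable is *sub-gamma on the right tail* with variance factor `v` and scale
parameter `c` (Boucheron, Lugosi and Massart, *Concentration inequalities*, Section 2.4) if
`E exp (t X) ≤ exp (v t² / (2 (1 - c t)))` whenever `0 ≤ t` and `c t < 1`. As in Mathlib's
`HasSubgaussianMGF`, integrability is part of the definition because `mgf` is `0` without it. -/
structure HasSubGammaMGF (X : Ω → ℝ) (v c : ℝ) (μ : Measure Ω) : Prop where
  integrable_exp_mul : ∀ t, 0 ≤ t → c * t < 1 → Integrable (fun ω ↦ exp (t * X ω)) μ
  mgf_le : ∀ t, 0 ≤ t → c * t < 1 → mgf X μ t ≤ exp (v * t ^ 2 / (2 * (1 - c * t)))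

namespace HasSubGammaMGF

lemma mono {v' c' : ℝ} (h : HasSubGammaMGF X v c μ) (hv' : 0 ≤ v') (hv : v ≤ v') (hc : c ≤ c') :
    HasSubGammaMGF X v' c' μ := by
  have hct {t : ℝ} (ht : 0 ≤ t) : c * t ≤ c' * t := by gcongr
  refine ⟨fun t ht htc ↦ h.integrable_exp_mul t ht ((hct ht).trans_lt htc), fun t ht htc ↦ ?_⟩
  refine (h.mgf_le t ht ((hct ht).trans_lt htc)).trans ?_
  have : 0 < 1 - c' * t := by linarith
  gcongr

lemma const_mul (h : HasSubGammaMGF X v c μ) {a : ℝ} (ha : 0 ≤ a) :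
    HasSubGammaMGF (fun ω ↦ a * X ω) (a ^ 2 * v) (a * c) μ where
  integrable_exp_mul t ht htc := by
    simpa only [mul_assoc] using h.integrable_exp_mul (t * a) (by positivity) (by linarith)
  mgf_le t ht htc := by
    rw [ProbabilityTheory.mgf_const_mul]
    convert h.mgf_le (a * t) (by positivity) (by linarith) using 2
    ring

lemma comp_measurePreserving_iff {Ω' : Type*} {mΩ' : MeasurableSpace Ω'} {ν : Measure Ω'}
    {Y : Ω' → Ω} (hY : MeasurePreserving Y ν μ) (hX : Measurable X) :
    HasSubGammaMGF (X ∘ Y) v c ν ↔ HasSubGammaMGF X v c μ := by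
  have hexp (t : ℝ) : AEStronglyMeasurable (fun ω ↦ exp (t * X ω)) μ :=
    (by fun_prop : Measurable fun ω ↦ exp (t * X ω)).aestronglyMeasurable
  have hint (t : ℝ) : Integrable (fun ω ↦ exp (t * (X ∘ Y) ω)) ν ↔
      Integrable (fun ω ↦ exp (t * X ω)) μ := hY.integrable_comp (hexp t)
  have hmgf (t : ℝ) : mgf (X ∘ Y) ν t = mgf X μ t := by
    rw [← ProbabilityTheory.mgf_map hY.aemeasurable (hY.map_eq ▸ hexp t), hY.map_eq]
  refine ⟨fun h ↦ ⟨?_, ?_⟩, fun h ↦ ⟨?_, ?_⟩⟩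
  · simpa only [hint] using h.integrable_exp_mul
  · simpa only [hmgf] using h.mgf_le
  · simpa only [hint] using h.integrable_exp_mul
  · simpa only [hmgf] using h.mgf_le

lemma sum_of_iIndepFun {ι : Type*} {X : ι → Ω → ℝ} {v : ι → ℝ} {s : Finset ι}
    (h_indep : iIndepFun X μ) (h_meas : ∀ i, Measurable (X i))
    (h : ∀ i ∈ s, HasSubGammaMGF (X i) (v i) c μ) :
    HasSubGammaMGF (fun ω ↦ ∑ i ∈ s, X i ω) (∑ i ∈ s, v i) c μ where
  integrable_exp_mul t ht htc := by
    have := h_indep.isProbabilityMeasure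
    simpa only [Finset.sum_apply] using h_indep.integrable_exp_mul_sum h_meas
      fun i hi ↦ (h i hi).integrable_exp_mul t ht htc
  mgf_le t ht htc := by
    have hmgf := h_indep.mgf_sum (t := t) h_meas s
    simp only [← Finset.sum_apply] at hmgf ⊢
    rw [show (fun ω ↦ (∑ i ∈ s, X i) ω) = ∑ i ∈ s, X i from rfl, hmgf, Finset.sum_mul,
      Finset.sum_div, exp_sum]
    exact Finset.prod_le_prod (fun _ _ ↦ ProbabilityTheory.mgf_nonneg)
      fun i hi ↦ (h i hi).mgf_le t ht htc

lemma sum_pi {ι : Type*} [Fintype ι] {E : ι → Type*} [∀ i, MeasurableSpace (E i)]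
    {P : ∀ i, Measure (E i)} [∀ i, IsProbabilityMeasure (P i)] {f : ∀ i, E i → ℝ} {v : ι → ℝ}
    (h_meas : ∀ i, Measurable (f i)) (h : ∀ i, HasSubGammaMGF (f i) (v i) c (P i)) :
    HasSubGammaMGF (fun x ↦ ∑ i, f i (x i)) (∑ i, v i) c (Measure.pi P) :=
  sum_of_iIndepFun (X := fun i (x : ∀ i, E i) ↦ f i (x i))
    (ProbabilityTheory.iIndepFun_pi fun i ↦ (h_meas i).aemeasurable)
    (fun i ↦ (h_meas i).comp (measurable_pi_apply i))
    fun i _ ↦ (comp_measurePreserving_iff (measurePreserving_eval P i) (h_meas i)).2 (h i)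

/-- Chernoff's bound at `t = a / (1 + c a)` with `a = √(2 x / v)`, the minimizer of the
exponent. -/
lemma measureReal_ge_le [IsFiniteMeasure μ] (h : HasSubGammaMGF X v c μ) (hv : 0 < v)
    (hc : 0 ≤ c) {x : ℝ} (hx : 0 ≤ x) :
    μ.real {ω | √(2 * v * x) + c * x ≤ X ω} ≤ exp (-x) := by
  obtain ⟨a, ha, rfl⟩ : ∃ a, 0 ≤ a ∧ x = v * a ^ 2 / 2 :=
    ⟨√(2 * x / v), sqrt_nonneg _, by rw [sq_sqrt (by positivity)]; field_simp⟩
  have : 0 < 1 + c * a := by positivity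
  set t := a / (1 + c * a) with ht
  have hct : 1 - c * t = 1 / (1 + c * a) := by rw [ht]; field_simp; ring
  have ht0 : 0 ≤ t := by positivity
  have htc : c * t < 1 := by
    have : 0 < 1 - c * t := by rw [hct]; positivity
    linarith
  have hsqrt : √(2 * v * (v * a ^ 2 / 2)) = v * a := by
    rw [show 2 * v * (v * a ^ 2 / 2) = (v * a) ^ 2 by ring, sqrt_sq (by positivity)]
  calc _ ≤ exp (-t * (√(2 * v * (v * a ^ 2 / 2)) + c * (v * a ^ 2 / 2))) * mgf X μ t :=
        ProbabilityTheory.measure_ge_le_exp_mul_mgf _ ht0 (h.integrable_exp_mul t ht0 htc)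
    _ ≤ exp (-t * (v * a + c * (v * a ^ 2 / 2))) * exp (v * t ^ 2 / (2 * (1 - c * t))) := by
        rw [hsqrt]
        gcongr
        exact h.mgf_le t ht0 htc
    _ = exp (-(v * a ^ 2 / 2)) := by
        rw [← exp_add, hct, ht]
        congr 1
        field_simp
        ring

lemma measureReal_abs_ge_le [IsFiniteMeasure μ] (h : HasSubGammaMGF X v c μ)
    (h_neg : HasSubGammaMGF (-X) v c μ) (hv : 0 < v) (hc : 0 ≤ c) {x : ℝ} (hx : 0 ≤ x) :
    μ.real {ω | √(2 * v * x) + c * x ≤ |X ω|} ≤ 2 * exp (-x) := by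
  simp only [le_abs, Set.ofPred_or, two_mul (exp _)]
  exact (measureReal_union_le _ _).trans
    (add_le_add (h.measureReal_ge_le hv hc hx) (h_neg.measureReal_ge_le hv hc hx))

end HasSubGammaMGF

end SubGamma

section ChiSquare

lemma neg_half_log_one_sub_two_mul_le {a b : ℝ} (hab : |a| ≤ b) (hb : 2 * b < 1) :
    -(1 / 2) * log (1 - 2 * a) ≤ a + a ^ 2 / (1 - 2 * b) := by
  have hab' := abs_le.1 hab
  rcases le_total 0 a with ha | ha
  · have hd : 0 < 1 - 2 * a := by linarith
    have hsinh := self_le_sinh_iff.2 (neg_nonneg.2 (log_nonpos hd.le (by linarith)))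
    rw [sinh_eq, neg_neg, exp_neg, exp_log hd] at hsinh
    calc -(1 / 2) * log (1 - 2 * a) ≤ ((1 - 2 * a)⁻¹ - (1 - 2 * a)) / 2 / 2 := by linarith
      _ = a + a ^ 2 / (1 - 2 * a) := by field_simp; ring
      _ ≤ a + a ^ 2 / (1 - 2 * b) := by gcongr; exact hab'.2
  · have hlog := le_log_one_add_of_nonneg (x := -2 * a) (by linarith)
    rw [show 1 + -2 * a = 1 - 2 * a by ring] at hlog
    have hfrac : -(2 * (a + a ^ 2)) ≤ 2 * (-2 * a) / (-2 * a + 2) := by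
      rw [le_div_iff₀ (by linarith)]
      nlinarith [mul_nonneg (neg_nonneg.2 ha) (sq_nonneg a)]
    calc -(1 / 2) * log (1 - 2 * a) ≤ a + a ^ 2 / 1 := by linarith
      _ ≤ a + a ^ 2 / (1 - 2 * b) := by gcongr; linarith [abs_nonneg a]

lemma exp_mul_sq_mul_gaussianPDFReal (a z : ℝ) :
    ProbabilityTheory.gaussianPDFReal 0 1 z * exp (a * z ^ 2) =
      (√(2 * π))⁻¹ * exp (-(1 / 2 - a) * z ^ 2) := by
  rw [ProbabilityTheory.gaussianPDFReal, mul_assoc, ← exp_add]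
  simp only [NNReal.coe_one, mul_one]
  congr 2
  ring

lemma integrable_exp_mul_sq_gaussianReal {a : ℝ} (ha : 2 * a < 1) :
    Integrable (fun z ↦ exp (a * z ^ 2)) (gaussianReal 0 1) := by
  rw [ProbabilityTheory.gaussianReal_of_var_ne_zero _ one_ne_zero,
    integrable_withDensity_iff_integrable_smul' (by fun_prop)
      (ae_of_all _ fun _ ↦ ProbabilityTheory.gaussianPDF_lt_top)]
  simp only [ProbabilityTheory.toReal_gaussianPDF, smul_eq_mul, exp_mul_sq_mul_gaussianPDFReal]
  exact (integrable_exp_neg_mul_sq (by linarith)).const_mul _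

lemma integral_exp_mul_sq_gaussianReal {a : ℝ} (ha : 2 * a < 1) :
    ∫ z, exp (a * z ^ 2) ∂gaussianReal 0 1 = exp (-(1 / 2) * log (1 - 2 * a)) := by
  have ha' : 0 < 1 - 2 * a := by linarith
  rw [ProbabilityTheory.integral_gaussianReal_eq_integral_smul one_ne_zero]
  simp only [smul_eq_mul, exp_mul_sq_mul_gaussianPDFReal]
  rw [integral_const_mul, integral_gaussian, ← sqrt_inv, ← sqrt_mul (by positivity), sqrt_eq_rpow,
    mul_comm (-(1 / 2)), ← rpow_def_of_pos ha', rpow_neg ha'.le, ← inv_rpow ha'.le]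
  congr 1
  field_simp

lemma hasSubGammaMGF_const_mul_sq_sub_one_gaussianReal (a : ℝ) :
    HasSubGammaMGF (fun z ↦ a * (z ^ 2 - 1)) (2 * a ^ 2) (2 * |a|) (gaussianReal 0 1) := by
  have hexp (t z : ℝ) :
      exp (t * (a * (z ^ 2 - 1))) = exp (-(t * a)) * exp (t * a * z ^ 2) := by
    rw [← exp_add]; congr 1; ring
  have hta {t : ℝ} (ht : 0 ≤ t) (htc : 2 * |a| * t < 1) : 2 * (t * a) < 1 := by
    nlinarith [le_abs_self a]
  refine ⟨fun t ht htc ↦ ?_, fun t ht htc ↦ ?_⟩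
  · simp only [hexp]
    exact (integrable_exp_mul_sq_gaussianReal (hta ht htc)).const_mul _
  · have hlog := neg_half_log_one_sub_two_mul_le (a := t * a) (b := t * |a|)
      (by rw [abs_mul, abs_of_nonneg ht]) (by linarith)
    simp only [mgf, hexp]
    rw [integral_const_mul, integral_exp_mul_sq_gaussianReal (hta ht htc), ← exp_add, exp_le_exp]
    calc -(t * a) + -(1 / 2) * log (1 - 2 * (t * a))
        ≤ (t * a) ^ 2 / (1 - 2 * (t * |a|)) := by linarith
      _ = 2 * a ^ 2 * t ^ 2 / (2 * (1 - 2 * |a| * t)) := by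
        rw [mul_pow, mul_assoc 2, mul_div_mul_left _ _ two_ne_zero]; ring

lemma hasSubGammaMGF_sum_mul_sq_sub_one {ι : Type*} [Fintype ι] {d : ι → ℝ} {b : ℝ}
    (hd : ∀ i, |d i| ≤ b) :
    HasSubGammaMGF (fun z : ι → ℝ ↦ ∑ i, d i * (z i ^ 2 - 1)) (2 * ∑ i, d i ^ 2) (2 * b)
      (Measure.pi fun _ ↦ gaussianReal 0 1) := by
  rw [Finset.mul_sum]
  refine .sum_pi (f := fun i y ↦ d i * (y ^ 2 - 1)) (fun i ↦ by fun_prop) fun i ↦ ?_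
  exact (hasSubGammaMGF_const_mul_sq_sub_one_gaussianReal (d i)).mono (by positivity) le_rfl
    (by linarith [hd i])

end ChiSquare

section ProductDensity

variable {ι : Type*} [Fintype ι] {E : ι → Type*} [∀ i, MeasurableSpace (E i)]
  {μ : ∀ i, Measure (E i)} [∀ i, SigmaFinite (μ i)] {f : ∀ i, E i → ℝ≥0∞}

lemma lintegral_pi_prod (hf : ∀ i, Measurable (f i)) :
    ∫⁻ x, ∏ i, f i (x i) ∂Measure.pi μ = ∏ i, ∫⁻ y, f i y ∂μ i := by
  classical
  have hmarg (s : Finset ι) : ∀ x, (∫⋯∫⁻_s, fun x ↦ ∏ i ∈ s, f i (x i) ∂μ) x =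
      ∏ i ∈ s, ∫⁻ y, f i y ∂μ i := by
    induction s using Finset.induction_on with
    | empty => simp
    | insert i s hi ih =>
      intro x
      rw [lmarginal_insert' _ (by fun_prop) hi, Finset.prod_insert hi, ← ih x, lmarginal, lmarginal,
        ← lintegral_const_mul _ (by fun_prop)]
      refine lintegral_congr fun y ↦ ?_
      rw [← lintegral_mul_const _ (hf i)]
      refine lintegral_congr fun z ↦ ?_
      rw [Finset.prod_insert hi, Function.update_self]
      congr 1
      exact Finset.prod_congr rfl fun j hj ↦ by
        rw [Function.update_of_ne (ne_of_mem_of_not_mem hj hi)]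
  rcases isEmpty_or_nonempty (∀ i, E i) with h | ⟨⟨x⟩⟩
  · obtain ⟨i, hi⟩ := isEmpty_pi.1 h
    simp [Finset.prod_eq_zero (Finset.mem_univ i)]
  · rw [lintegral_eq_lmarginal_univ x, hmarg]

lemma pi_withDensity [∀ i, SigmaFinite ((μ i).withDensity (f i))] (hf : ∀ i, Measurable (f i)) :
    Measure.pi (fun i ↦ (μ i).withDensity (f i)) =
      (Measure.pi μ).withDensity fun x ↦ ∏ i, f i (x i) := by
  refine Measure.pi_eq fun s hs ↦ ?_
  rw [withDensity_apply _ (.univ_pi hs), Measure.restrict_pi_pi, lintegral_pi_prod hf]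
  exact Finset.prod_congr rfl fun i _ ↦ (withDensity_apply _ (hs i)).symm

end ProductDensity

section MultivariateGaussian

variable {p : ℕ} {W : Matrix (Fin p) (Fin p) ℝ}

lemma measurable_gaussianPDF (C : Matrix (Fin p) (Fin p) ℝ) : Measurable (gaussianPDF C) := by
  unfold gaussianPDF dotProduct mulVec dotProduct
  fun_prop

lemma iidGaussian_eq_pi (n : ℕ) (C : Matrix (Fin p) (Fin p) ℝ) :
    iidGaussian n p C = Measure.pi fun _ ↦ gaussianMeasure C := by
  have : SigmaFinite (volume.withDensity (gaussianPDF C)) := SigmaFinite.withDensity_ofReal _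
  simp only [gaussianMeasure]
  rw [pi_withDensity fun _ ↦ measurable_gaussianPDF C, iidGaussian, volume_pi]

lemma gaussianPDF_one (x : Fin p → ℝ) :
    gaussianPDF 1 x = ∏ i, ProbabilityTheory.gaussianPDF 0 1 (x i) := by
  have hconst : (2 * π) ^ (-(p : ℝ) / 2) = ∏ _i : Fin p, (√(2 * π))⁻¹ := by
    rw [Finset.prod_const, Finset.card_univ, Fintype.card_fin, sqrt_eq_rpow,
      ← rpow_neg (by positivity), ← rpow_mul_natCast (by positivity)]
    congr 1
    ring
  simp only [gaussianPDF, ProbabilityTheory.gaussianPDF, ProbabilityTheory.gaussianPDFReal,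
    NNReal.coe_one, mul_one, sub_zero, det_one, one_rpow, inv_one, one_mulVec]
  rw [← ENNReal.ofReal_prod_of_nonneg fun _ _ ↦ by positivity, Finset.prod_mul_distrib, ← exp_sum,
    hconst, dotProduct, Finset.mul_sum]
  congr! 4 with i
  ring

lemma gaussianMeasure_one : gaussianMeasure 1 = Measure.pi fun _ : Fin p ↦ gaussianReal 0 1 := by
  have : SigmaFinite (volume.withDensity (ProbabilityTheory.gaussianPDF 0 1)) :=
    SigmaFinite.withDensity_ofReal _
  simp only [ProbabilityTheory.gaussianReal_of_var_ne_zero _ one_ne_zero]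
  rw [pi_withDensity fun _ ↦ ProbabilityTheory.measurable_gaussianPDF 0 1, gaussianMeasure,
    funext gaussianPDF_one, volume_pi]

lemma lintegral_eq_abs_det_mul_lintegral_mulVec {ι : Type*} [Fintype ι] [DecidableEq ι]
    {W : Matrix ι ι ℝ} (hW : W.det ≠ 0) {g : (ι → ℝ) → ℝ≥0∞} (hg : Measurable g) :
    ∫⁻ x, g x = ENNReal.ofReal |W.det| * ∫⁻ z, g (W *ᵥ z) := by
  have h := congrArg (∫⁻ x, g x ∂·) (Real.map_matrix_volume_pi_eq_smul_volume_pi hW)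
  simp only [lintegral_smul_measure, smul_eq_mul] at h
  rw [lintegral_map hg (LinearMap.continuous_on_pi _).measurable] at h
  simp only [toLin'_apply] at h
  rw [h, ← mul_assoc, ← ENNReal.ofReal_mul (abs_nonneg _), ← abs_mul, mul_inv_cancel₀ hW, abs_one,
    ENNReal.ofReal_one, one_mul]

lemma ofReal_abs_det_mul_gaussianPDF_mulVec (hW : W.det ≠ 0) (z : Fin p → ℝ) :
    ENNReal.ofReal |W.det| * gaussianPDF (W * Wᵀ) (W *ᵥ z) = gaussianPDF 1 z := by
  have hdet : |W.det| * (W * Wᵀ).det ^ (-(1 : ℝ) / 2) = 1 := by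
    rw [det_mul, det_transpose, neg_div, rpow_neg (mul_self_nonneg _), ← sqrt_eq_rpow,
      sqrt_mul_self_eq_abs]
    exact mul_inv_cancel₀ (abs_ne_zero.2 hW)
  have hquad : (W *ᵥ z) ⬝ᵥ (W * Wᵀ)⁻¹ *ᵥ (W *ᵥ z) = z ⬝ᵥ z := by
    rw [Matrix.mul_inv_rev, mulVec_mulVec, Matrix.mul_assoc, nonsing_inv_mul _ hW.isUnit,
      Matrix.mul_one, dotProduct_mulVec, ← transpose_nonsing_inv, vecMul_transpose, mulVec_mulVec,
      nonsing_inv_mul _ hW.isUnit, one_mulVec]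
  rw [gaussianPDF, gaussianPDF, ← ENNReal.ofReal_mul (abs_nonneg _), hquad, inv_one, one_mulVec,
    det_one, one_rpow, mul_one]
  congr 1
  linear_combination (2 * π) ^ (-(p : ℝ) / 2) * exp (-(1 / 2) * (z ⬝ᵥ z)) * hdet

lemma measurePreserving_mulVec_gaussianMeasure (hW : W.det ≠ 0) :
    MeasurePreserving (W *ᵥ ·) (Measure.pi fun _ ↦ gaussianReal 0 1)
      (gaussianMeasure (W * Wᵀ)) := by
  have hmeas : Measurable (W *ᵥ · : (Fin p → ℝ) → Fin p → ℝ) :=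
    (LinearMap.continuous_on_pi W.mulVecLin).measurable
  refine ⟨hmeas, Measure.ext fun s hs ↦ ?_⟩
  rw [← gaussianMeasure_one, Measure.map_apply hmeas hs, gaussianMeasure, gaussianMeasure,
    withDensity_apply _ (hmeas hs), withDensity_apply _ hs, ← lintegral_indicator hs,
    ← lintegral_indicator (hmeas hs), lintegral_eq_abs_det_mul_lintegral_mulVec hW
    ((measurable_gaussianPDF _).indicator hs),
    ← lintegral_const_mul (f := fun z ↦ s.indicator (gaussianPDF (W * Wᵀ)) (W *ᵥ z)) _
      (((measurable_gaussianPDF _).indicator hs).comp hmeas)]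
  refine lintegral_congr fun z ↦ ?_
  by_cases hz : W *ᵥ z ∈ s
  · rw [Set.indicator_of_mem hz, Set.indicator_of_mem (by exact hz),
      ofReal_abs_det_mul_gaussianPDF_mulVec hW]
  · rw [Set.indicator_of_notMem hz, Set.indicator_of_notMem (by exact hz), mul_zero]

end MultivariateGaussian

open scoped Matrix.Norms.L2Operator

section OperatorNorm

variable {m ι : Type*} [Fintype m] [Fintype ι] [DecidableEq ι]

/-- Schur's test. -/
lemma norm_le_of_sum_abs_le {A : Matrix m ι ℝ} {R : ℝ} (hR : 0 ≤ R)
    (hrow : ∀ i, ∑ j, |A i j| ≤ R) (hcol : ∀ j, ∑ i, |A i j| ≤ R) : ‖A‖ ≤ R := by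
  rw [l2_opNorm_def]
  refine ContinuousLinearMap.opNorm_le_bound _ hR fun x ↦ le_of_sq_le_sq ?_ (by positivity)
  rw [mul_pow, EuclideanSpace.real_norm_sq_eq, EuclideanSpace.real_norm_sq_eq]
  calc ∑ i, (∑ j, A i j * x j) ^ 2 ≤ ∑ i, R * ∑ j, |A i j| * x j ^ 2 := by
        refine Finset.sum_le_sum fun i _ ↦ ?_
        refine (Finset.sum_sq_le_sum_mul_sum_of_sq_le_mul (f := fun j ↦ |A i j|)
          (g := fun j ↦ |A i j| * x j ^ 2) _ (fun j _ ↦ by positivity) (fun j _ ↦ by positivity)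
          fun j _ ↦ le_of_eq ?_).trans (by gcongr; exact hrow i)
        rw [← mul_assoc, abs_mul_abs_self, mul_pow, sq (A i j)]
    _ = R * ∑ j, (∑ i, |A i j|) * x j ^ 2 := by
        simp only [← Finset.mul_sum, Finset.sum_mul]
        rw [Finset.sum_comm]
    _ ≤ R * ∑ j, R * x j ^ 2 := by gcongr with j; exact hcol j
    _ = R ^ 2 * ∑ j, x j ^ 2 := by rw [← Finset.mul_sum]; ring

lemma dotProduct_mulVec_le_norm_mul (A : Matrix ι ι ℝ) (x : ι → ℝ) :
    x ⬝ᵥ A *ᵥ x ≤ ‖A‖ * (x ⬝ᵥ x) := by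
  have hinner (y z : ι → ℝ) : y ⬝ᵥ z = inner ℝ (WithLp.toLp 2 z) (WithLp.toLp 2 y) := by
    rw [EuclideanSpace.inner_toLp_toLp, star_trivial]
  calc x ⬝ᵥ A *ᵥ x ≤ ‖WithLp.toLp 2 (A *ᵥ x)‖ * ‖WithLp.toLp 2 x‖ := by
        rw [hinner]; exact real_inner_le_norm _ _
    _ ≤ ‖A‖ * ‖WithLp.toLp 2 x‖ * ‖WithLp.toLp 2 x‖ := by
        gcongr; exact l2_opNorm_mulVec A (WithLp.toLp 2 x)
    _ = ‖A‖ * (x ⬝ᵥ x) := by rw [hinner, real_inner_self_eq_norm_mul_norm, mul_assoc]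

lemma posSemidef_norm_smul_one_sub {C : Matrix ι ι ℝ} (hC : C.IsHermitian) :
    (‖C‖ • (1 : Matrix ι ι ℝ) - C).PosSemidef := by
  refine .of_dotProduct_mulVec_nonneg ((isHermitian_one.smul (.all _)).sub hC) fun x ↦ ?_
  rw [star_trivial, sub_mulVec, dotProduct_sub, smul_mulVec, one_mulVec, dotProduct_smul,
    smul_eq_mul]
  exact sub_nonneg.2 (dotProduct_mulVec_le_norm_mul C x)

lemma norm_transpose_mul_mul_le (W B : Matrix ι ι ℝ) : ‖Wᵀ * B * W‖ ≤ ‖W * Wᵀ‖ * ‖B‖ := by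
  have hWt : ‖Wᵀ‖ = ‖W‖ := by
    rw [← conjTranspose_eq_transpose_of_trivial, l2_opNorm_conjTranspose]
  have hWW : ‖W * Wᵀ‖ = ‖W‖ * ‖W‖ := by
    have := l2_opNorm_conjTranspose_mul_self Wᵀ
    rwa [conjTranspose_eq_transpose_of_trivial, transpose_transpose, hWt] at this
  calc ‖Wᵀ * B * W‖ ≤ ‖Wᵀ‖ * ‖B‖ * ‖W‖ := by
        grw [l2_opNorm_mul, l2_opNorm_mul]
    _ = ‖W * Wᵀ‖ * ‖B‖ := by rw [hWW, hWt]; ring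

end OperatorNorm

section QuadraticForm

lemma exists_mul_transpose_eq_and_transpose_mul_mul_eq_diagonal {ι : Type*} [Fintype ι]
    [DecidableEq ι] {C B : Matrix ι ι ℝ} (hC : C.PosSemidef) (hB : B.IsSymm) :
    ∃ (W : Matrix ι ι ℝ) (d : ι → ℝ), W * Wᵀ = C ∧ Wᵀ * B * W = diagonal d := by
  obtain ⟨D, hD⟩ : ∃ D : Matrix ι ι ℝ, C = Dᵀ * D := by
    open scoped MatrixOrder in
    obtain ⟨D, hD⟩ := CStarAlgebra.nonneg_iff_eq_star_mul_self.1 hC.nonneg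
    exact ⟨D, by rwa [star_eq_conjTranspose, conjTranspose_eq_transpose_of_trivial] at hD⟩
  have hM : (D * B * Dᵀ).IsHermitian := by
    rw [IsHermitian, conjTranspose_eq_transpose_of_trivial, transpose_mul, transpose_mul,
      transpose_transpose, hB.eq, Matrix.mul_assoc]
  set U : Matrix ι ι ℝ := hM.eigenvectorUnitary.1 with hU
  have hUU : U * Uᵀ = 1 := by
    have := Unitary.coe_mul_star_self hM.eigenvectorUnitary
    rwa [Unitary.coe_star, star_eq_conjTranspose,
      conjTranspose_eq_transpose_of_trivial] at this
  refine ⟨Dᵀ * U, hM.eigenvalues, ?_, ?_⟩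
  · rw [transpose_mul, transpose_transpose, Matrix.mul_assoc, ← Matrix.mul_assoc U, hUU, hD,
      Matrix.one_mul]
  · have hdiag := hM.conjStarAlgAut_star_eigenvectorUnitary
    simp only [Unitary.conjStarAlgAut_apply, Unitary.coe_star, star_eq_conjTranspose,
      conjTranspose_eq_transpose_of_trivial, ← hU] at hdiag
    simp only [transpose_mul, transpose_transpose, Matrix.mul_assoc] at hdiag ⊢
    exact hdiag

lemma trace_mul_mul_mul_le_norm_mul {ι : Type*} [Fintype ι] [DecidableEq ι] {C B : Matrix ι ι ℝ}
    (hC : C.PosSemidef) (hB : B.IsSymm) :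
    trace (B * C * (B * C)) ≤ ‖C‖ * trace (B * B * C) := by
  obtain ⟨W, -, hW, -⟩ := exists_mul_transpose_eq_and_transpose_mul_mul_eq_diagonal hC hB
  have htr (M : Matrix ι ι ℝ) : trace ((B * W)ᴴ * M * (B * W)) = trace (B * M * (B * C)) := by
    rw [conjTranspose_eq_transpose_of_trivial, transpose_mul, hB.eq, ← hW, trace_mul_comm (B * M),
      trace_mul_cycle]
    simp only [Matrix.mul_assoc]
  have hnonneg := ((posSemidef_norm_smul_one_sub hC.1).conjTranspose_mul_mul_same
    (B * W)).trace_nonneg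
  rw [htr, Matrix.mul_sub, Matrix.sub_mul, trace_sub, Matrix.mul_smul, Matrix.mul_one,
    Matrix.smul_mul, trace_smul, smul_eq_mul, ← Matrix.mul_assoc] at hnonneg
  linarith

variable {n p : ℕ} {C B : Matrix (Fin p) (Fin p) ℝ}

lemma exists_measurePreserving_mulVec_gaussianMeasure (hC : C.PosDef) (hB : B.IsSymm) :
    ∃ (W : Matrix (Fin p) (Fin p) ℝ) (d : Fin p → ℝ),
      W * Wᵀ = C ∧ Wᵀ * B * W = diagonal d ∧
      MeasurePreserving (W *ᵥ ·) (Measure.pi fun _ ↦ gaussianReal 0 1) (gaussianMeasure C) := by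
  obtain ⟨W, d, rfl, hd⟩ :=
    exists_mul_transpose_eq_and_transpose_mul_mul_eq_diagonal hC.posSemidef hB
  have hW : W.det ≠ 0 := by
    have := hC.det_pos.ne'
    rw [det_mul] at this
    exact left_ne_zero_of_mul this
  exact ⟨W, d, rfl, hd, measurePreserving_mulVec_gaussianMeasure hW⟩

lemma isProbabilityMeasure_gaussianMeasure (hC : C.PosDef) :
    IsProbabilityMeasure (gaussianMeasure C) := by
  obtain ⟨W, -, -, -, hW⟩ := exists_measurePreserving_mulVec_gaussianMeasure hC isSymm_one
  exact hW.map_eq ▸ Measure.isProbabilityMeasure_map hW.aemeasurable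

lemma isProbabilityMeasure_iidGaussian (hC : C.PosDef) :
    IsProbabilityMeasure (iidGaussian n p C) := by
  have := isProbabilityMeasure_gaussianMeasure hC
  rw [iidGaussian_eq_pi]
  infer_instance

lemma measurable_dotProduct_mulVec (B : Matrix (Fin p) (Fin p) ℝ) :
    Measurable fun x : Fin p → ℝ ↦ x ⬝ᵥ B *ᵥ x := by
  unfold dotProduct mulVec dotProduct
  fun_prop

lemma hasSubGammaMGF_dotProduct_mulVec_sub_trace (hC : C.PosDef) (hB : B.IsSymm) :
    HasSubGammaMGF (fun x ↦ x ⬝ᵥ B *ᵥ x - trace (B * C)) (2 * trace (B * C * (B * C)))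
      (2 * (‖C‖ * ‖B‖)) (gaussianMeasure C) := by
  obtain ⟨W, d, rfl, hd, hW⟩ := exists_measurePreserving_mulVec_gaussianMeasure hC hB
  have hnorm (i : Fin p) : |d i| ≤ ‖W * Wᵀ‖ * ‖B‖ := by
    refine le_trans ?_ (norm_transpose_mul_mul_le W B)
    rw [hd, l2_opNorm_diagonal]
    exact norm_le_pi_norm d i
  have htrace : trace (B * (W * Wᵀ)) = ∑ i, d i := by
    rw [← Matrix.mul_assoc, trace_mul_comm, ← Matrix.mul_assoc, hd, trace_diagonal]
  have htrace_sq : trace (B * (W * Wᵀ) * (B * (W * Wᵀ))) = ∑ i, d i ^ 2 := by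
    calc _ = trace (B * W * Wᵀ * B * W * Wᵀ) := by simp only [Matrix.mul_assoc]
      _ = trace (Wᵀ * B * W * (Wᵀ * B * W)) := by
        rw [trace_mul_comm]; simp only [Matrix.mul_assoc]
      _ = ∑ i, d i ^ 2 := by rw [hd, diagonal_mul_diagonal, trace_diagonal]; simp only [sq]
  rw [← HasSubGammaMGF.comp_measurePreserving_iff hW
    ((measurable_dotProduct_mulVec B).sub_const _), htrace_sq, htrace]
  have hquad (z : Fin p → ℝ) : (W *ᵥ z) ⬝ᵥ B *ᵥ (W *ᵥ z) = ∑ i, d i * z i ^ 2 := by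
    calc _ = z ⬝ᵥ (Wᵀ * B * W) *ᵥ z := by
          rw [← mulVec_mulVec, ← mulVec_mulVec, dotProduct_mulVec z, vecMul_transpose]
      _ = ∑ i, d i * z i ^ 2 := by
          rw [hd]
          exact Finset.sum_congr rfl fun i _ ↦ by rw [mulVec_diagonal]; ring
  convert hasSubGammaMGF_sum_mul_sq_sub_one hnorm using 1
  ext z
  simp only [Function.comp_apply, hquad, mul_sub, mul_one, Finset.sum_sub_distrib]

lemma trace_mul_sampleCov_sub (hn : n ≠ 0) (B C : Matrix (Fin p) (Fin p) ℝ)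
    (X : Fin n → Fin p → ℝ) :
    trace (B * (sampleCov X - C)) =
      (n : ℝ)⁻¹ * ∑ k, (X k ⬝ᵥ B *ᵥ X k - trace (B * C)) := by
  have hterm (k : Fin n) : trace (B * of fun i j ↦ X k i * X k j) = X k ⬝ᵥ B *ᵥ X k := by
    simp only [trace, diag_apply, mul_apply, of_apply, dotProduct, mulVec, Finset.mul_sum]
    exact Finset.sum_congr rfl fun i _ ↦ Finset.sum_congr rfl fun j _ ↦ by ring
  rw [Matrix.mul_sub, trace_sub, sampleCov, Matrix.mul_smul, trace_smul, Matrix.mul_sum, trace_sum,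
    Finset.sum_congr rfl fun k _ ↦ hterm k, Finset.sum_sub_distrib, Finset.sum_const,
    Finset.card_univ, Fintype.card_fin, nsmul_eq_mul, smul_eq_mul, mul_sub,
    inv_mul_cancel_left₀ (by exact_mod_cast hn)]

lemma hasSubGammaMGF_trace_mul_sampleCov_sub (hn : n ≠ 0) (hC : C.PosDef) (hB : B.IsSymm) :
    HasSubGammaMGF (fun X ↦ trace (B * (sampleCov X - C))) (2 * trace (B * C * (B * C)) / n)
      (2 * (‖C‖ * ‖B‖) / n) (iidGaussian n p C) := by
  have := isProbabilityMeasure_gaussianMeasure hC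
  have hsum := HasSubGammaMGF.sum_pi (ι := Fin n)
    (fun _ ↦ (measurable_dotProduct_mulVec B).sub_const (trace (B * C)))
    fun _ ↦ hasSubGammaMGF_dotProduct_mulVec_sub_trace hC hB
  rw [← iidGaussian_eq_pi] at hsum
  convert hsum.const_mul (a := (n : ℝ)⁻¹) (by positivity) using 1
  · exact funext fun X ↦ trace_mul_sampleCov_sub hn B C X
  · rw [Finset.sum_const, Finset.card_univ, Fintype.card_fin, nsmul_eq_mul]
    field_simp
  · ring

lemma measureReal_abs_trace_mul_sampleCov_sub_ge_le (hn : n ≠ 0) (hC : C.PosDef) (hB : B.IsSymm)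
    {v c x : ℝ} (hv0 : 0 < v) (hv : 2 * trace (B * C * (B * C)) / n ≤ v)
    (hc : 2 * (‖C‖ * ‖B‖) / n ≤ c) (hx : 0 ≤ x) :
    (iidGaussian n p C).real {X | √(2 * v * x) + c * x ≤ |trace (B * (sampleCov X - C))|} ≤
      2 * exp (-x) := by
  have := isProbabilityMeasure_iidGaussian (n := n) hC
  have hpos := (hasSubGammaMGF_trace_mul_sampleCov_sub hn hC hB).mono hv0.le hv hc
  have hneg := hasSubGammaMGF_trace_mul_sampleCov_sub hn hC hB.neg
  simp only [Matrix.neg_mul, Matrix.mul_neg, neg_neg, trace_neg, norm_neg] at hneg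
  exact hpos.measureReal_abs_ge_le (hneg.mono hv0.le hv hc) hv0 (le_trans (by positivity) hc) hx

end QuadraticForm

section Toeplitz

/-- The symmetric `p × p` Toeplitz matrix whose entries at distance `d` from the main diagonal are
`v d`; it gives the covariance matrices of the class `F(s, S, σ)` and the matrices `A_j` a common
form. -/
def symmToeplitz {R : Type*} (p : ℕ) (v : ℕ → R) : Matrix (Fin p) (Fin p) R :=
  of fun k l ↦ v ((k : ℤ) - (l : ℤ)).natAbs

lemma symmToeplitz_apply {R : Type*} {p : ℕ} (v : ℕ → R) (k l : Fin p) :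
    symmToeplitz p v k l = v ((k : ℤ) - (l : ℤ)).natAbs :=
  rfl

lemma symmToeplitz_apply_self {R : Type*} {p : ℕ} (v : ℕ → R) (k : Fin p) :
    symmToeplitz p v k k = v 0 := by
  rw [symmToeplitz_apply, sub_self, Int.natAbs_zero]

lemma isSymm_symmToeplitz {R : Type*} (p : ℕ) (v : ℕ → R) : (symmToeplitz p v).IsSymm :=
  IsSymm.ext fun k l ↦ by rw [symmToeplitz_apply, symmToeplitz_apply, ← Int.natAbs_neg, neg_sub]

lemma symmToeplitz_single_zero_one {R : Type*} [Zero R] [One R] (p : ℕ) :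
    symmToeplitz p (Pi.single 0 1) = (1 : Matrix (Fin p) (Fin p) R) := by
  ext k l
  rw [symmToeplitz_apply, Pi.single_apply, one_apply]
  exact if_congr (by rw [Int.natAbs_eq_zero, sub_eq_zero, Nat.cast_inj, Fin.val_inj]) rfl rfl

lemma lagMatrix_eq_symmToeplitz (p j : ℕ) :
    lagMatrix p j = symmToeplitz p (Pi.single j (1 / (2 * ((p : ℝ) - j)))) := by
  ext k l
  rw [symmToeplitz_apply, Pi.single_apply, lagMatrix, of_apply]

lemma isSymm_lagMatrix (p j : ℕ) : (lagMatrix p j).IsSymm :=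
  lagMatrix_eq_symmToeplitz p j ▸ isSymm_symmToeplitz p _

lemma card_filter_natAbs_sub_eq_le_two {p : ℕ} (k : Fin p) (d : ℕ) :
    (Finset.univ.filter fun l : Fin p ↦ ((k : ℤ) - (l : ℤ)).natAbs = d).card ≤ 2 := by
  calc _ ≤ ({(k : ℕ) + d, (k : ℕ) - d} : Finset ℕ).card := by
        refine Finset.card_le_card_of_injOn Fin.val (fun l hl ↦ ?_) Fin.val_injective.injOn
        rw [Finset.mem_coe, Finset.mem_filter] at hl
        rw [Finset.mem_coe, Finset.mem_insert, Finset.mem_singleton]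
        omega
    _ ≤ 2 := Finset.card_le_two

lemma sum_card_filter_val_eq_val_add (p j : ℕ) :
    ∑ k : Fin p, (Finset.univ.filter fun l : Fin p ↦ (l : ℕ) = k + j).card = p - j := by
  have hcard (k : Fin p) :
      (Finset.univ.filter fun l : Fin p ↦ (l : ℕ) = k + j).card =
        if (k : ℕ) + j < p then 1 else 0 := by
    split_ifs with h
    · exact Finset.card_eq_one.2 ⟨⟨k + j, h⟩, by ext l; simp [Fin.ext_iff]⟩
    · exact Finset.card_eq_zero.2 (Finset.filter_eq_empty_iff.2 fun l _ ↦ by omega)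
  rw [Finset.sum_congr rfl fun k _ ↦ hcard k,
    Fin.sum_univ_eq_sum_range (fun k ↦ if k + j < p then 1 else 0), ← Finset.card_filter,
    show (Finset.range p).filter (· + j < p) = Finset.range (p - j) by
      ext k; simp only [Finset.mem_filter, Finset.mem_range]; omega, Finset.card_range]

lemma sum_card_filter_natAbs_sub_eq {j : ℕ} (hj : 1 ≤ j) (p : ℕ) :
    ∑ k : Fin p, (Finset.univ.filter fun l : Fin p ↦ ((k : ℤ) - (l : ℤ)).natAbs = j).card =
      2 * (p - j) := by
  have hcard (k : Fin p) :
      (Finset.univ.filter fun l : Fin p ↦ ((k : ℤ) - (l : ℤ)).natAbs = j).card =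
        (Finset.univ.filter fun l : Fin p ↦ (l : ℕ) = k + j).card +
          (Finset.univ.filter fun l : Fin p ↦ (k : ℕ) = l + j).card := by
    rw [← Finset.card_union_of_disjoint (Finset.disjoint_filter.2 fun l _ _ ↦ by omega),
      ← Finset.filter_or]
    exact congrArg Finset.card (Finset.filter_congr fun l _ ↦ by omega)
  have hflip : ∑ k : Fin p, (Finset.univ.filter fun l : Fin p ↦ (k : ℕ) = l + j).card =
      ∑ k : Fin p, (Finset.univ.filter fun l : Fin p ↦ (l : ℕ) = k + j).card := by
    simp only [Finset.card_filter]
    exact Finset.sum_comm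
  rw [Finset.sum_congr rfl fun k _ ↦ hcard k, Finset.sum_add_distrib, hflip,
    sum_card_filter_val_eq_val_add, two_mul]

variable {p j : ℕ} {v : ℕ → ℝ} {T : Finset ℕ}

lemma sum_abs_symmToeplitz_le (hT : ∀ d, 0 < d → d < p → d ∉ T → v d = 0) (k : Fin p) :
    ∑ l, |symmToeplitz p v k l| ≤ |v 0| + 2 * ∑ d ∈ T, |v d| := by
  calc ∑ l, |symmToeplitz p v k l|
      ≤ ∑ l : Fin p, ((if k = l then |v 0| else 0) +
          ∑ d ∈ T, if ((k : ℤ) - (l : ℤ)).natAbs = d then |v d| else 0) := by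
        refine Finset.sum_le_sum fun l _ ↦ ?_
        rw [symmToeplitz_apply, Finset.sum_ite_eq]
        rcases eq_or_ne k l with rfl | hkl
        · rw [if_pos rfl, sub_self, Int.natAbs_zero]
          exact le_add_of_nonneg_right (by split_ifs <;> positivity)
        · rw [if_neg hkl, zero_add]
          split_ifs with hmem
          · rfl
          · have := Fin.val_ne_of_ne hkl
            rw [hT _ (by omega) (by omega) hmem, abs_zero]
    _ = |v 0| + ∑ d ∈ T,
          (Finset.univ.filter fun l : Fin p ↦ ((k : ℤ) - (l : ℤ)).natAbs = d).card * |v d| := by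
        rw [Finset.sum_add_distrib, Finset.sum_ite_eq, if_pos (Finset.mem_univ k),
          Finset.sum_comm]
        simp only [← Finset.sum_filter, Finset.sum_const, nsmul_eq_mul]
    _ ≤ |v 0| + 2 * ∑ d ∈ T, |v d| := by
        rw [Finset.mul_sum]
        gcongr with d
        exact_mod_cast card_filter_natAbs_sub_eq_le_two k d

lemma norm_symmToeplitz_le (hT : ∀ d, 0 < d → d < p → d ∉ T → v d = 0) :
    ‖symmToeplitz p v‖ ≤ |v 0| + 2 * ∑ d ∈ T, |v d| :=
  norm_le_of_sum_abs_le (by positivity) (sum_abs_symmToeplitz_le hT) fun l ↦ by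
    simpa only [(isSymm_symmToeplitz p v).apply] using sum_abs_symmToeplitz_le hT l

lemma norm_lagMatrix_le (hj : 1 ≤ j) (hjp : j < p) : ‖lagMatrix p j‖ ≤ 1 / ((p : ℝ) - j) := by
  have hpos : (0 : ℝ) < p - j := sub_pos.2 (by exact_mod_cast hjp)
  rw [lagMatrix_eq_symmToeplitz]
  refine (norm_symmToeplitz_le (T := {j}) fun d _ _ hd ↦
    Pi.single_eq_of_ne (by simpa using hd) _).trans_eq ?_
  rw [Pi.single_eq_of_ne (by omega), abs_zero, zero_add, Finset.sum_singleton, Pi.single_eq_same,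
    abs_of_pos (by positivity)]
  field_simp

lemma two_mul_abs_apply_le_add {ι : Type*} [Finite ι] {C : Matrix ι ι ℝ} (hC : C.PosSemidef)
    (i k : ι) : 2 * |C i k| ≤ C i i + C k k := by
  classical
  have := Fintype.ofFinite ι
  have hsymm : C k i = C i k := by simpa using hC.1.apply i k
  have hquad (c : ℝ) : 0 ≤ C i i + 2 * c * C i k + c ^ 2 * C k k := by
    have h := hC.dotProduct_mulVec_nonneg (Pi.single i 1 + c • Pi.single k 1)
    simp only [star_trivial, mulVec_add, mulVec_smul, dotProduct_add, add_dotProduct,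
      smul_dotProduct, dotProduct_smul, mulVec_single_one, single_one_dotProduct, col_apply,
      smul_eq_mul, hsymm] at h
    linarith
  cases abs_cases (C i k) <;> linarith [hquad 1, hquad (-1)]

lemma norm_symmToeplitz_le_of_posSemidef (hC : (symmToeplitz p v).PosSemidef)
    (hTp : ∀ d ∈ T, d < p) (hT : ∀ d, 0 < d → d < p → d ∉ T → v d = 0) :
    ‖symmToeplitz p v‖ ≤ |v 0| * (2 * T.card + 1) := by
  have habs (d : ℕ) (hd : d ∈ T) : |v d| ≤ |v 0| := by
    have hdp := hTp d hd
    have h := two_mul_abs_apply_le_add hC ⟨d, hdp⟩ ⟨0, by omega⟩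
    rw [symmToeplitz_apply_self, symmToeplitz_apply_self, symmToeplitz_apply, Nat.cast_zero,
      sub_zero, Int.natAbs_natCast] at h
    linarith [le_abs_self (v 0)]
  calc ‖symmToeplitz p v‖ ≤ |v 0| + 2 * ∑ d ∈ T, |v d| := norm_symmToeplitz_le hT
    _ ≤ |v 0| + 2 * ∑ _d ∈ T, |v 0| := by gcongr 2; exact Finset.sum_le_sum habs
    _ = |v 0| * (2 * T.card + 1) := by rw [Finset.sum_const, nsmul_eq_mul]; ring

lemma trace_lagMatrix_mul_symmToeplitz (hj : 1 ≤ j) (hjp : j < p) (v : ℕ → ℝ) :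
    trace (lagMatrix p j * symmToeplitz p v) = v j := by
  have hpos : (0 : ℝ) < p - j := sub_pos.2 (by exact_mod_cast hjp)
  have hterm (k l : Fin p) : lagMatrix p j k l * symmToeplitz p v l k =
      if ((k : ℤ) - (l : ℤ)).natAbs = j then v j / (2 * (p - j)) else 0 := by
    rw [(isSymm_symmToeplitz p v).apply, symmToeplitz_apply, lagMatrix, of_apply, ite_mul,
      zero_mul]
    exact if_ctx_congr .rfl (fun h ↦ by rw [h]; ring) fun _ ↦ rfl
  simp only [trace, diag_apply, mul_apply, hterm, ← Finset.sum_filter, Finset.sum_const,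
    nsmul_eq_mul, ← Finset.sum_mul]
  rw [← Nat.cast_sum, sum_card_filter_natAbs_sub_eq hj, Nat.cast_mul, Nat.cast_sub hjp.le,
    Nat.cast_ofNat]
  field_simp

lemma trace_lagMatrix_mul_sub_one (hj : 1 ≤ j) (hjp : j < p) (M : Matrix (Fin p) (Fin p) ℝ) :
    trace (lagMatrix p j * (M - 1)) = trace (lagMatrix p j * M) := by
  rw [Matrix.mul_sub, trace_sub, ← symmToeplitz_single_zero_one,
    trace_lagMatrix_mul_symmToeplitz hj hjp, Pi.single_eq_of_ne (by omega), sub_zero]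

lemma lagMatrix_mul_lagMatrix_apply_eq_zero {k l : Fin p} (hkl : k ≠ l)
    (h : ((k : ℤ) - (l : ℤ)).natAbs ≠ 2 * j) : (lagMatrix p j * lagMatrix p j) k l = 0 := by
  have := Fin.val_ne_of_ne hkl
  rw [mul_apply]
  refine Finset.sum_eq_zero fun m _ ↦ ?_
  rw [mul_eq_zero, lagMatrix, of_apply, of_apply, ite_eq_right_iff, ite_eq_right_iff]
  omega

lemma trace_lagMatrix_mul_lagMatrix_mul_symmToeplitz (hj : 1 ≤ j) (hjp : j < p)
    (hv : 2 * j < p → v (2 * j) = 0) :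
    trace (lagMatrix p j * lagMatrix p j * symmToeplitz p v) = v 0 / (2 * (p - j)) := by
  have hdiag (k : Fin p) : (lagMatrix p j * lagMatrix p j * symmToeplitz p v) k k =
      (lagMatrix p j * lagMatrix p j) k k * v 0 := by
    rw [mul_apply, Finset.sum_eq_single k (fun l _ hlk ↦ ?_) (by simp), symmToeplitz_apply_self]
    by_cases h : ((k : ℤ) - (l : ℤ)).natAbs = 2 * j
    · rw [(isSymm_symmToeplitz p v).apply, symmToeplitz_apply, h, hv (by omega), mul_zero]
    · rw [lagMatrix_mul_lagMatrix_apply_eq_zero hlk.symm h, zero_mul]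
  calc trace (lagMatrix p j * lagMatrix p j * symmToeplitz p v)
      = trace (lagMatrix p j * lagMatrix p j) * v 0 := by
        simp only [trace, diag_apply, hdiag, Finset.sum_mul]
    _ = v 0 / (2 * (p - j)) := by
        nth_rw 2 [lagMatrix_eq_symmToeplitz]
        rw [trace_lagMatrix_mul_symmToeplitz hj hjp, Pi.single_eq_same]
        ring

end Toeplitz

section Risk

lemma sqrt_two_mul_add_two_mul_le_max {y : ℝ} (hy : 0 ≤ y) :
    √(2 * y) + 2 * y ≤ max √(4 * y) (8 * y) := by
  obtain ⟨r, hr, rfl⟩ : ∃ r, 0 ≤ r ∧ y = r ^ 2 := ⟨√y, sqrt_nonneg y, (sq_sqrt hy).symm⟩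
  have h2 : √(2 * r ^ 2) ≤ 3 / 2 * r := sqrt_le_iff.2 ⟨by positivity, by nlinarith [sq_nonneg r]⟩
  have h4 : √(4 * r ^ 2) = 2 * r := by
    rw [show 4 * r ^ 2 = (2 * r) ^ 2 by ring, sqrt_sq (by positivity)]
  rw [h4, le_max_iff]
  rcases le_total r (1 / 4) with h | h
  · left; nlinarith
  · right; nlinarith

variable {n p j S s : ℕ} {v : ℕ → ℝ} {x t τ : ℝ}

lemma measureReal_abs_trace_lagMatrix_mul_sampleCov_sub_ge_le (hn : n ≠ 0) (hj : 1 ≤ j)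
    (hC : (symmToeplitz p v).PosDef) (hv0 : v 0 = 1) (hv : 2 * j < p → v (2 * j) = 0)
    {K q : ℝ} (hK0 : 0 < K) (hK : ‖symmToeplitz p v‖ ≤ K) (hq : 0 < q) (hjq : q ≤ p - j)
    (hx : 0 ≤ x) (hτ : max √(4 * (K / (n * q) * x)) (8 * (K / (n * q) * x)) ≤ τ) :
    (iidGaussian n p (symmToeplitz p v)).real
      {X | τ ≤ |trace (lagMatrix p j * (sampleCov X - symmToeplitz p v))|} ≤ 2 * exp (-x) := by
  have hpj : (0 : ℝ) < p - j := hq.trans_le hjq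
  have hjp : j < p := by exact_mod_cast sub_pos.1 hpj
  have hvar : 2 * trace (lagMatrix p j * symmToeplitz p v * (lagMatrix p j * symmToeplitz p v)) / n
      ≤ K / (n * q) := by
    calc _ ≤ 2 * (K * (1 / (2 * q))) / n := by
          grw [trace_mul_mul_mul_le_norm_mul hC.posSemidef (isSymm_lagMatrix p j),
            trace_lagMatrix_mul_lagMatrix_mul_symmToeplitz hj hjp hv, hv0, hK, hjq]
      _ = K / (n * q) := by field_simp
  have hscale : 2 * (‖symmToeplitz p v‖ * ‖lagMatrix p j‖) / n ≤ 2 * (K / (n * q)) := by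
    calc _ ≤ 2 * (K * (1 / q)) / n := by grw [hK, norm_lagMatrix_le hj hjp, hjq]
      _ = 2 * (K / (n * q)) := by field_simp
  have := isProbabilityMeasure_iidGaussian (n := n) hC
  refine (measureReal_mono fun X hX ↦ ?_).trans <| measureReal_abs_trace_mul_sampleCov_sub_ge_le hn
    hC (isSymm_lagMatrix p j) (by positivity) hvar hscale hx
  have hmax := sqrt_two_mul_add_two_mul_le_max (y := K / (n * q) * x) (by positivity)
  simpa only [mul_assoc, Set.mem_ofPred_eq] using (hmax.trans hτ).trans hX

lemma measureReal_one_sum_abs_trace_ge_le (hn : n ≠ 0) (hS : 1 ≤ S) (hSp : S < p) (hx : 0 ≤ x)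
    (ht : S * τ ≤ t)
    (hτ : max √(4 * (1 / (n * (p - S)) * x)) (8 * (1 / (n * (p - S)) * x)) ≤ τ) :
    (iidGaussian n p 1).real
      {X | t ≤ ∑ i ∈ Finset.Icc 1 S, |trace (lagMatrix p i * (sampleCov X - 1))|} ≤
      S * (2 * exp (-x)) := by
  have hp : (0 : ℝ) < p - S := sub_pos.2 (by exact_mod_cast hSp)
  have := isProbabilityMeasure_iidGaussian (n := n) (PosDef.one (n := Fin p) (R := ℝ))
  have htail (i : ℕ) (hi : i ∈ Finset.Icc 1 S) : (iidGaussian n p 1).real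
      {X | τ ≤ |trace (lagMatrix p i * (sampleCov X - 1))|} ≤ 2 * exp (-x) := by
    obtain ⟨hi1, hiS⟩ := Finset.mem_Icc.1 hi
    have hiq : (p : ℝ) - S ≤ p - i := by gcongr
    have h1 := symmToeplitz_single_zero_one (R := ℝ) p
    have : NeZero p := ⟨by omega⟩
    rw [← h1]
    exact measureReal_abs_trace_lagMatrix_mul_sampleCov_sub_ge_le hn hi1 (h1 ▸ PosDef.one)
      (Pi.single_eq_same _ _) (fun _ ↦ Pi.single_eq_of_ne (by omega) _) one_pos
      (h1 ▸ norm_one.le) hp hiq hx hτ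
  calc _ ≤ (iidGaussian n p 1).real (⋃ i ∈ Finset.Icc 1 S,
        {X | τ ≤ |trace (lagMatrix p i * (sampleCov X - 1))|}) := by
        refine measureReal_mono (fun X hX ↦ ?_) (measure_ne_top _ _)
        obtain ⟨i, hi, hτi⟩ := Finset.exists_le_of_sum_le (Finset.nonempty_Icc.2 hS)
          (f := fun _ ↦ τ) (by simpa using ht.trans hX)
        exact Set.mem_biUnion hi hτi
    _ ≤ ∑ i ∈ Finset.Icc 1 S, 2 * exp (-x) :=
        (measureReal_biUnion_finset_le _ _).trans (Finset.sum_le_sum htail)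
    _ = S * (2 * exp (-x)) := by
        rw [Finset.sum_const, Nat.card_Icc, Nat.add_sub_cancel, nsmul_eq_mul]

lemma measureReal_sum_abs_trace_lt_le (hn : n ≠ 0) (hs : 1 ≤ s) (hSp : S < p) (hx : 0 ≤ x)
    {σ : ℝ} (hσ : t + τ ≤ σ)
    (hτ : max √(4 * ((2 * s + 1) / (n * (p - S)) * x)) (8 * ((2 * s + 1) / (n * (p - S)) * x)) ≤ τ)
    {C : Matrix (Fin p) (Fin p) ℝ} (hC : memF p s S σ 1 C) :
    (iidGaussian n p C).real
      {X | ∑ i ∈ Finset.Icc 1 S, |trace (lagMatrix p i * (sampleCov X - 1))| < t} ≤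
      2 * exp (-x) := by
  obtain ⟨hpd, v, hv0, hv, T, hTS, rfl, hTσ, hT⟩ := hC
  obtain rfl : C = symmToeplitz p v := Matrix.ext hv
  have := isProbabilityMeasure_iidGaussian (n := n) hpd
  have hp : (0 : ℝ) < p - S := sub_pos.2 (by exact_mod_cast hSp)
  have hT_nonempty : T.Nonempty := Finset.card_pos.1 hs
  obtain ⟨j, hjT, hj_max⟩ := T.exists_max_image id hT_nonempty
  obtain ⟨hj1, hjS⟩ := Finset.mem_Icc.1 (hTS hjT)
  have h2j : 2 * j ∉ T := fun h ↦ by have : 2 * j ≤ j := hj_max _ h; omega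
  have hnorm : ‖symmToeplitz p v‖ ≤ 2 * T.card + 1 := by
    have h := norm_symmToeplitz_le_of_posSemidef hpd.posSemidef
      (fun d hd ↦ (Finset.mem_Icc.1 (hTS hd)).2.trans_lt hSp)
      fun d hd hdp hdT ↦ hT d hd (by omega) hdT
    rwa [hv0, abs_one, one_mul] at h
  refine (measureReal_mono fun X hX ↦ ?_).trans <|
    measureReal_abs_trace_lagMatrix_mul_sampleCov_sub_ge_le hn hj1 hpd hv0
      (fun h ↦ hT _ (by omega) (by omega) h2j) (by positivity) hnorm hp (by gcongr) hx hτ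
  have hle : |trace (lagMatrix p j * (sampleCov X - 1))| < t :=
    (Finset.single_le_sum (f := fun i ↦ |trace (lagMatrix p i * (sampleCov X - 1))|)
      (fun i _ ↦ abs_nonneg _) (hTS hjT)).trans_lt hX
  rw [trace_lagMatrix_mul_sub_one hj1 (by omega)] at hle
  rw [Set.mem_ofPred_eq, Matrix.mul_sub, trace_sub,
    trace_lagMatrix_mul_symmToeplitz hj1 (by omega), abs_sub_comm]
  linarith [hTσ j hjT, abs_sub_abs_le_abs_sub (v j) (trace (lagMatrix p j * sampleCov X))]

end Risk

theorem test_MS_risk_general {p n s S : ℕ} (hn : 0 < n) (hs : 1 ≤ s) (hsS : s ≤ S) (hS : S < p)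
    (u σ t : ℝ) (hu : 1 ≤ u)
    (ht : t = (S : ℝ) * max (Real.sqrt (4 * u * Real.log S / (n * ((p : ℝ) - S))))
        (8 * u * Real.log S / (n * ((p : ℝ) - S))))
    (hσ : σ ≥ t + max (Real.sqrt (4 * (u - 1) * (2 * s + 1) * Real.log S / (n * ((p : ℝ) - S))))
        (8 * (u - 1) * (2 * s + 1) * Real.log S / (n * ((p : ℝ) - S)))) :
    (iidGaussian n p 1) {X |
        (∑ i ∈ Finset.Icc 1 S, |Matrix.trace (lagMatrix p i * (sampleCov X - 1))|) ≥ t}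
    + ⨆ (Cov : Matrix (Fin p) (Fin p) ℝ) (_ : memF p s S σ 1 Cov),
        (iidGaussian n p Cov) {X |
          (∑ i ∈ Finset.Icc 1 S, |Matrix.trace (lagMatrix p i * (sampleCov X - 1))|) < t}
    ≤ ENNReal.ofReal (4 * Real.exp (-(u - 1) * Real.log S)) := by
  have hS0 : (0 : ℝ) < S := by exact_mod_cast hs.trans hsS
  have : 0 ≤ log S := log_natCast_nonneg S
  have : 0 ≤ u - 1 := by linarith
  have hexp : S * (2 * exp (-(u * log S))) = 2 * exp (-(u - 1) * log S) := by
    rw [show -(u - 1) * log S = log S + -(u * log S) by ring, exp_add, exp_log hS0, mul_left_comm]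
  have htypeI := measureReal_one_sum_abs_trace_ge_le hn.ne' (hs.trans hsS) hS
    (x := u * log S) (by positivity) ht.ge (Eq.le (by ring_nf))
  have htypeII (C : Matrix (Fin p) (Fin p) ℝ) (hC : memF p s S σ 1 C) :=
    measureReal_sum_abs_trace_lt_le hn.ne' hs hS (x := (u - 1) * log S) (by positivity) hσ
      (Eq.le (by ring_nf)) hC
  have := isProbabilityMeasure_iidGaussian (n := n) (PosDef.one (n := Fin p) (R := ℝ))
  calc _ ≤ ENNReal.ofReal (2 * exp (-(u - 1) * log S)) +
        ENNReal.ofReal (2 * exp (-(u - 1) * log S)) := by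
        refine add_le_add ?_ (iSup₂_le fun C hC ↦ ?_)
        · rw [← ofReal_measureReal]
          exact ENNReal.ofReal_le_ofReal (htypeI.trans_eq hexp)
        · have := isProbabilityMeasure_iidGaussian (n := n) hC.1
          rw [← ofReal_measureReal, neg_mul]
          exact ENNReal.ofReal_le_ofReal (htypeII C hC)
    _ = ENNReal.ofReal (4 * exp (-(u - 1) * log S)) := by
        rw [← ENNReal.ofReal_add (by positivity) (by positivity)]
        ring_nf

/-- Risk bound for the two-sided moderately-sparse test `Δ^{MS}`. -/
theorem test_MS_risk {p n s S : ℕ} (hn : 0 < n) (hs : 1 ≤ s) (hsS : s ≤ S)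
    (hS2 : 2 ≤ S) (hS : (S : ℝ) < (p:ℝ)/2) (u σ t : ℝ) (hu : 1 < u)
    (ht : t = (S : ℝ) * max (Real.sqrt (4 * u * Real.log S / (n * ((p:ℝ) - S))))
        (8 * u * Real.log S / (n * ((p:ℝ) - S))))
    (hσ : σ ≥ t + max (Real.sqrt (4 * (u - 1) * (2 * s + 1) * Real.log S / (n * ((p:ℝ) - S))))
        (8 * (u - 1) * (2 * s + 1) * Real.log S / (n * ((p:ℝ) - S)))) :
    (iidGaussian n p 1) {X |
        (∑ i ∈ Finset.Icc 1 S, |Matrix.trace (lagMatrix p i * (sampleCov X - 1))|) ≥ t}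
    + ⨆ (Cov : Matrix (Fin p) (Fin p) ℝ) (_ : memF p s S σ 1 Cov),
        (iidGaussian n p Cov) {X |
          (∑ i ∈ Finset.Icc 1 S, |Matrix.trace (lagMatrix p i * (sampleCov X - 1))|) < t}
    ≤ ENNReal.ofReal (4 * Real.exp (-(u - 1) * Real.log S)) := by
  have hSp : (S : ℝ) < p := by linarith [S.cast_nonneg (α := ℝ)]
  exact test_MS_risk_general hn hs hsS (by exact_mod_cast hSp) u σ t hu.le ht hσ
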